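/- arXiv:2310.17556 — 3 statements merged into one kernel-verified Lean document; each statement's English description precedes it below -/
import Mathlib

section
/- Let S be an n×m real matrix, λ > 0 a real number, and v an m-dimensional real vector. Suppose L is an invertible n×n real matrix with LLᵀ = SSᵀ + λĨ (e.g., the Cholesky factor of SSᵀ + λĨ), and set Q = L⁻¹S. Then the vector x = (1/λ)·(v − QᵀQ v) satisfies (SᵀS + λI)x = v, i.e., Algorithm 1 (Cholesky Solve of Damped Fisher) is correct. -/
open Matrix

/-!
The push-through identity `(B * A + c • 1) * B = B * (A * B + c • 1)` trades the inverse of the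
`m × m` damped matrix for that of the `n × n` one: it turns
`(B * A + c • 1) * (B * (A * B + c • 1)⁻¹ * A)` into `B * A`. For `A = S` and `B = Sᵀ`, the
factorization `L * Lᵀ = S * Sᵀ + lam • 1` identifies `B * (A * B + c • 1)⁻¹ * A` with `Qᵀ * Q`.
-/

section PushThrough

variable {m n R : Type*} [Fintype m] [Fintype n] [DecidableEq m] [DecidableEq n]

theorem mul_add_smul_one_mul_eq_mul_mul_add_smul_one [CommSemiring R]
    (A : Matrix n m R) (B : Matrix m n R) (c : R) :
    (B * A + c • (1 : Matrix m m R)) * B = B * (A * B + c • (1 : Matrix n n R)) := by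
  rw [Matrix.add_mul, Matrix.mul_add, Matrix.mul_assoc, Matrix.smul_mul, Matrix.mul_smul,
    Matrix.one_mul, Matrix.mul_one]

variable [CommRing R]

theorem mul_add_smul_one_mul_mul_inv_mul (A : Matrix n m R) (B : Matrix m n R) (c : R)
    (h : IsUnit (A * B + c • (1 : Matrix n n R))) :
    (B * A + c • (1 : Matrix m m R)) * (B * (A * B + c • (1 : Matrix n n R))⁻¹ * A) = B * A := by
  rw [← Matrix.mul_assoc, ← Matrix.mul_assoc, mul_add_smul_one_mul_eq_mul_mul_add_smul_one,
    mul_nonsing_inv_cancel_right _ _ ((isUnit_iff_isUnit_det _).mp h)]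

theorem mul_add_smul_one_mul_one_sub_mul_inv_mul (A : Matrix n m R) (B : Matrix m n R) (c : R)
    (h : IsUnit (A * B + c • (1 : Matrix n n R))) :
    (B * A + c • (1 : Matrix m m R)) * (1 - B * (A * B + c • (1 : Matrix n n R))⁻¹ * A) =
      c • (1 : Matrix m m R) := by
  rw [Matrix.mul_sub, Matrix.mul_one, mul_add_smul_one_mul_mul_inv_mul A B c h,
    add_sub_cancel_left]

end PushThrough

section Cholesky

variable {m n R : Type*} [Fintype n] [DecidableEq n] [CommRing R]

theorem transpose_inv_mul_mul_inv_mul (L : Matrix n n R) (S : Matrix n m R) :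
    (L⁻¹ * S)ᵀ * (L⁻¹ * S) = Sᵀ * (L * Lᵀ)⁻¹ * S := by
  rw [transpose_mul, transpose_nonsing_inv, Matrix.mul_inv_rev]
  simp only [Matrix.mul_assoc]

theorem cholesky_solve_damped_fisher_correct_general [Fintype m] [DecidableEq m]
    (S : Matrix n m R) (lam : Rˣ) (v : m → R) (L : Matrix n n R) (hL : IsUnit L)
    (hLL : L * Lᵀ = S * Sᵀ + (lam : R) • (1 : Matrix n n R))
    (Q : Matrix n m R) (hQ : Q = L⁻¹ * S)
    (x : m → R) (hx : x = lam⁻¹ • (v - (Qᵀ * Q) *ᵥ v)) :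
    (Sᵀ * S + (lam : R) • (1 : Matrix m m R)) *ᵥ x = v := by
  have hunit : IsUnit (S * Sᵀ + (lam : R) • (1 : Matrix n n R)) :=
    hLL ▸ hL.mul ((isUnit_transpose L).mpr hL)
  have hQQ : Qᵀ * Q = Sᵀ * (S * Sᵀ + (lam : R) • (1 : Matrix n n R))⁻¹ * S := by
    rw [hQ, transpose_inv_mul_mul_inv_mul, hLL]
  have hsolve : (Sᵀ * S + (lam : R) • (1 : Matrix m m R)) * (1 - Qᵀ * Q) =
      (lam : R) • (1 : Matrix m m R) := by
    rw [hQQ, mul_add_smul_one_mul_one_sub_mul_inv_mul S Sᵀ _ hunit]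
  calc (Sᵀ * S + (lam : R) • (1 : Matrix m m R)) *ᵥ x
      = lam⁻¹ • (((Sᵀ * S + (lam : R) • (1 : Matrix m m R)) * (1 - Qᵀ * Q)) *ᵥ v) := by
        rw [hx, mulVec_smul, ← mulVec_mulVec v _ (1 - Qᵀ * Q), sub_mulVec, one_mulVec]
    _ = lam⁻¹ • lam • v := by
        rw [hsolve, smul_mulVec, one_mulVec, Units.smul_def lam v]
    _ = v := inv_smul_smul lam v

end Cholesky

/-- Correctness of Algorithm 1 (Cholesky Solve of Damped Fisher): if `L` is an
invertible `n × n` matrix with `L Lᵀ = S Sᵀ + lam Ĩ` and `Q = L⁻¹ S`, then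
`x = (1/lam) • (v - Qᵀ Q v)` solves `(Sᵀ S + lam I) x = v`. -/
theorem cholesky_solve_damped_fisher_correct (n m : ℕ)
    (S : Matrix (Fin n) (Fin m) ℝ) (lam : ℝ) (hlam : 0 < lam) (v : Fin m → ℝ)
    (L : Matrix (Fin n) (Fin n) ℝ) (hL : IsUnit L)
    (hLL : L * Lᵀ = S * Sᵀ + lam • (1 : Matrix (Fin n) (Fin n) ℝ))
    (Q : Matrix (Fin n) (Fin m) ℝ) (hQ : Q = L⁻¹ * S)
    (x : Fin m → ℝ)
    (hx : x = lam⁻¹ • (v - (Qᵀ * Q).mulVec v)) :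
    (Sᵀ * S + lam • (1 : Matrix (Fin m) (Fin m) ℝ)).mulVec x = v :=
  cholesky_solve_damped_fisher_correct_general S (Units.mk0 lam hlam.ne') v L hL hLL Q hQ x hx
end

section
/- Let S be an n×m real matrix, λ > 0 a real number, and v an m-dimensional real vector. Suppose L is an invertible n×n real matrix with LLᵀ = SSᵀ + λĨ, and set Q = L⁻¹S. If x* satisfies (SᵀS + λI)x* = v, then SᵀS x* = QᵀQ v. -/
open Matrix

/-!
The factorization `L Lᵀ = S Sᵀ + lam Ĩ` gives `Qᵀ Q = Sᵀ (S Sᵀ + lam Ĩ)⁻¹ S`, and the push-through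
identity `S (Sᵀ S + lam I) = (S Sᵀ + lam Ĩ) S` then cancels the inverse when this matrix is applied
to `v = (Sᵀ S + lam I) x*`.
-/

section PushThrough

variable {m n R : Type*} [Fintype m] [Fintype n] [DecidableEq m] [DecidableEq n]

theorem mul_mul_add_smul_one_comm {α : Type*} [Semiring R] [Monoid α] [DistribMulAction α R]
    [IsScalarTower α R R] [SMulCommClass α R R]
    (A : Matrix n m R) (B : Matrix m n R) (c : α) :
    A * (B * A + c • (1 : Matrix m m R)) = (A * B + c • (1 : Matrix n n R)) * A := by
  rw [Matrix.mul_add, Matrix.add_mul, Matrix.mul_assoc, Matrix.mul_smul, Matrix.smul_mul,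
    Matrix.mul_one, Matrix.one_mul]

theorem mul_nonsing_inv_mul_mul_add_smul_one [CommRing R]
    {A : Matrix n m R} {B : Matrix m n R} {c : R}
    (h : IsUnit (A * B + c • (1 : Matrix n n R))) :
    B * (A * B + c • (1 : Matrix n n R))⁻¹ * A * (B * A + c • (1 : Matrix m m R)) = B * A := by
  rw [Matrix.mul_assoc, mul_mul_add_smul_one_comm, Matrix.mul_assoc,
    Matrix.nonsing_inv_mul_cancel_left _ _ ((Matrix.isUnit_iff_isUnit_det _).mp h)]

end PushThrough

theorem transpose_mul_self_nonsing_inv_mul {m n R : Type*} [Fintype n] [DecidableEq n]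
    [CommRing R] (L : Matrix n n R) (S : Matrix n m R) :
    (L⁻¹ * S)ᵀ * (L⁻¹ * S) = Sᵀ * (L * Lᵀ)⁻¹ * S := by
  simp only [Matrix.transpose_mul, Matrix.transpose_nonsing_inv, Matrix.mul_inv_rev,
    Matrix.mul_assoc]

theorem cholesky_solve_key_identity_general {m n R : Type*} [Fintype m] [Fintype n]
    [DecidableEq m] [DecidableEq n] [CommRing R]
    {S : Matrix n m R} {lam : R} {v : m → R} {L : Matrix n n R} (hL : IsUnit L)
    (hLL : L * Lᵀ = S * Sᵀ + lam • (1 : Matrix n n R))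
    {Q : Matrix n m R} (hQ : Q = L⁻¹ * S) {xs : m → R}
    (hxs : (Sᵀ * S + lam • (1 : Matrix m m R)).mulVec xs = v) :
    (Sᵀ * S).mulVec xs = (Qᵀ * Q).mulVec v := by
  have hunit : IsUnit (S * Sᵀ + lam • (1 : Matrix n n R)) :=
    hLL ▸ hL.mul (L.isUnit_transpose.mpr hL)
  have hgram : Qᵀ * Q = Sᵀ * (S * Sᵀ + lam • (1 : Matrix n n R))⁻¹ * S := by
    rw [hQ, transpose_mul_self_nonsing_inv_mul, hLL]
  rw [← hxs, Matrix.mulVec_mulVec, hgram, mul_nonsing_inv_mul_mul_add_smul_one hunit]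

/-- Key intermediate identity in the proof of correctness of Algorithm 1:
if `L Lᵀ = S Sᵀ + lam Ĩ` with `L` invertible, `Q = L⁻¹ S`, and
`(Sᵀ S + lam I) x* = v`, then `Sᵀ S x* = Qᵀ Q v`. -/
theorem cholesky_solve_key_identity (n m : ℕ)
    (S : Matrix (Fin n) (Fin m) ℝ) (lam : ℝ) (hlam : 0 < lam) (v : Fin m → ℝ)
    (L : Matrix (Fin n) (Fin n) ℝ) (hL : IsUnit L)
    (hLL : L * Lᵀ = S * Sᵀ + lam • (1 : Matrix (Fin n) (Fin n) ℝ))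
    (Q : Matrix (Fin n) (Fin m) ℝ) (hQ : Q = L⁻¹ * S)
    (xs : Fin m → ℝ)
    (hxs : (Sᵀ * S + lam • (1 : Matrix (Fin m) (Fin m) ℝ)).mulVec xs = v) :
    (Sᵀ * S).mulVec xs = (Qᵀ * Q).mulVec v :=
  cholesky_solve_key_identity_general hL hLL hQ hxs
end

section
/- Let S be an n×m complex matrix, λ > 0 a real number, and v an m-dimensional real vector. Let S̃ be the 2n×m real matrix obtained by concatenating the real part of S and the imaginary part of S along the row dimension. Then the vector x = (1/λ)·(v − S̃ᵀ(S̃S̃ᵀ + λĨ₂ₙ)⁻¹S̃ v) satisfies (Re(S†S) + λI)x = v. -/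
open Matrix

/-! The real part of `S† S` is `(Re S)ᵀ Re S + (Im S)ᵀ Im S = S̃ᵀ S̃`. By the push-through identity
`(S̃ᵀ S̃ + lam) S̃ᵀ = S̃ᵀ (S̃ S̃ᵀ + lam)`, the matrix `S̃ᵀ S̃ + lam` maps
`v - S̃ᵀ (S̃ S̃ᵀ + lam)⁻¹ S̃ v` to `S̃ᵀ S̃ v + lam v - S̃ᵀ S̃ v = lam v`. -/

section PushThrough

variable {ι κ R : Type*} [Fintype ι] [Fintype κ] [DecidableEq ι] [DecidableEq κ]

theorem mul_add_smul_one_mul_comm [CommSemiring R] (A : Matrix ι κ R) (B : Matrix κ ι R) (c : R) :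
    (B * A + c • 1) * B = B * (A * B + c • 1) := by
  simp only [Matrix.add_mul, Matrix.mul_add, Matrix.mul_assoc, Matrix.smul_mul, Matrix.mul_smul,
    Matrix.one_mul, Matrix.mul_one]

theorem mul_add_smul_one_mulVec_sub_eq_smul [CommRing R] (A : Matrix ι κ R) (B : Matrix κ ι R)
    (c : R) (hAB : IsUnit (A * B + c • 1)) (v : κ → R) :
    (B * A + c • 1) *ᵥ (v - B *ᵥ ((A * B + c • 1)⁻¹ *ᵥ (A *ᵥ v))) = c • v := by
  have hpush : (B * A + c • 1) * (B * ((A * B + c • 1)⁻¹ * A)) = B * A := by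
    rw [← Matrix.mul_assoc, mul_add_smul_one_mul_comm, Matrix.mul_assoc,
      mul_nonsing_inv_cancel_left _ _ ((isUnit_iff_isUnit_det _).mp hAB)]
  calc (B * A + c • 1) *ᵥ (v - B *ᵥ ((A * B + c • 1)⁻¹ *ᵥ (A *ᵥ v)))
    _ = (B * A + c • 1) *ᵥ v - (B * A) *ᵥ v := by
      simp only [mulVec_sub, mulVec_mulVec, hpush]
    _ = c • v := by
      rw [add_mulVec, add_sub_cancel_left, smul_mulVec, one_mulVec]

end PushThrough

theorem posDef_mul_conjTranspose_add_smul_one {ι κ α R : Type*} [Finite ι] [Fintype κ]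
    [DecidableEq ι] [CommSemiring α] [PartialOrder α] [StarRing α] [StarOrderedRing α] [Ring R]
    [PartialOrder R] [StarRing R] [StarOrderedRing R] [NoZeroDivisors R] [Algebra α R]
    [StarModule α R] [PosSMulStrictMono α R] (A : Matrix ι κ R) {c : α} (hc : 0 < c) :
    (A * Aᴴ + c • 1).PosDef :=
  PosDef.posSemidef_add (posSemidef_self_mul_conjTranspose A) (PosDef.one.smul hc)

section RealParts

variable {ι κ 𝕜 : Type*} [RCLike 𝕜]

/-- The real matrix `S̃ = Concat[Re S, Im S]`, with `Re S` stacked on top of `Im S`: rows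
`Sum.inl i` carry the real parts and rows `Sum.inr i` the imaginary parts. -/
def reImRows (S : Matrix ι κ 𝕜) : Matrix (ι ⊕ ι) κ ℝ :=
  fromRows (S.map RCLike.re) (S.map RCLike.im)

theorem transpose_reImRows_mul_self [Fintype ι] (S : Matrix ι κ 𝕜) :
    (reImRows S)ᵀ * reImRows S = (Sᴴ * S).map RCLike.re := by
  ext i j
  simp [reImRows, mul_apply, ← Finset.sum_add_distrib]

theorem real_part_sr_solve_general [Fintype ι] [Fintype κ] [DecidableEq ι] [DecidableEq κ]
    (S : Matrix ι κ 𝕜) {lam : ℝ} (hlam : lam ≠ 0)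
    (hS : IsUnit (reImRows S * (reImRows S)ᵀ + lam • 1)) (v : κ → ℝ) :
    ((Sᴴ * S).map RCLike.re + lam • 1) *ᵥ
      (lam⁻¹ • (v - (reImRows S)ᵀ *ᵥ
        ((reImRows S * (reImRows S)ᵀ + lam • 1)⁻¹ *ᵥ (reImRows S *ᵥ v)))) = v := by
  rw [← transpose_reImRows_mul_self, mulVec_smul,
    mul_add_smul_one_mulVec_sub_eq_smul _ _ _ hS, inv_smul_smul₀ hlam]

end RealParts

/-- The paper's algorithm applied to the real-part version of stochastic
reconfiguration: with `S̃ = Concat[Re S, Im S]`, the vector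
`x = (1/lam) • (v - S̃ᵀ (S̃ S̃ᵀ + lam Ĩ₂ₙ)⁻¹ S̃ v)` solves `(Re(S† S) + lam I) x = v`. -/
theorem real_part_sr_solve (n m : ℕ)
    (S : Matrix (Fin n) (Fin m) ℂ) (lam : ℝ) (hlam : 0 < lam) (v : Fin m → ℝ)
    (St : Matrix (Fin n ⊕ Fin n) (Fin m) ℝ)
    (hSt : St = Matrix.fromRows (S.map Complex.re) (S.map Complex.im))
    (x : Fin m → ℝ)
    (hx : x = lam⁻¹ •
      (v - Stᵀ.mulVec
        ((St * Stᵀ + lam • (1 : Matrix (Fin n ⊕ Fin n) (Fin n ⊕ Fin n) ℝ))⁻¹.mulVec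
          (St.mulVec v)))) :
    ((Sᴴ * S).map Complex.re + lam • (1 : Matrix (Fin m) (Fin m) ℝ)).mulVec x = v := by
  subst hSt hx
  exact real_part_sr_solve_general S hlam.ne'
    (posDef_mul_conjTranspose_add_smul_one (reImRows S) hlam).isUnit v
end
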